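/- Let K̂ : [0,β] → Matrix (Fin (r·n)) (Fin (r·n)) ℂ be differentiable with K̂(0) = I, K̂′(x) = 𝔸(x) K̂(x) and K̂(x) invertible for all x ∈ [0,β], and let M̂, N̂ ∈ Matrix (Fin (r·n)) (Fin (r·n)) ℂ be such that M̂_β := M̂ + N̂ K̂(β) is invertible. Write [T]_{(1,r)} for the n×n block of a matrix T ∈ Matrix (Fin (r·n)) (Fin (r·n)) ℂ whose rows are indexed by the first n indices and whose columns are indexed by the last n indices. Define k_P(x,y) := −[K̂(x) M̂_β⁻¹ N̂ K̂(β) K̂(y)⁻¹]_{(1,r)} · B_r(y)⁻¹ for 0 ≤ x < y ≤ β, and k_P(x,y) := [K̂(x)(I − M̂_β⁻¹ N̂ K̂(β)) K̂(y)⁻¹]_{(1,r)} · B_r(y)⁻¹ for 0 ≤ y < x ≤ β. Then for every continuous f : [0,β] → ℂⁿ, the function ψ(x) := ∫₀^β k_P(x,y) f(y) dy is r-times continuously differentiable on [0,β], satisfies Σ_{k=0}^{r} B_k(x) ψ^{(k)}(x) = f(x) for all x ∈ [0,β], and satisfies the boundary condition M̂ ψ̂(0) + N̂ ψ̂(β)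 = 0, where ψ̂ = (ψ, ψ′, …, ψ^{(r−1)}). -/

import Mathlib

/-!
The Green's kernel is variation of constants for the companion system, read off in the first block.
Put `g(y) = (0, …, 0, B_r(y)⁻¹ f(y))`, `h(y) = K̂(y)⁻¹ g(y)`, `H(x) = ∫₀ˣ h` and
`C = M̂_β⁻¹ N̂ K̂(β)`. Only the last block of `g` is nonzero, so the `(1,r)` block in `k_P` gives
`∫₀^β k_P(x,y) f(y) dy = Φ(x)₁` with `Φ(x) = K̂(x) (H(x) − C H(β))`, the jump of the kernel across
`x = y` accounting for the term `H(x)`.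

By the product rule `Φ′ = 𝔸 Φ + g`. The superdiagonal identity blocks of `𝔸` make block `k + 1` of
`Φ` the derivative of block `k`, so `Φ = ψ̂`, and the last block row reads
`ψ^{(r)} = B_r⁻¹ (f − Σ_{k<r} B_k ψ^{(k)})`, which is the differential equation. Finally
`M̂ Φ(0) + N̂ Φ(β) = (N̂ K̂(β) − (M̂ + N̂ K̂(β)) C) H(β) = 0` by the choice of `C`.
-/


open Set MeasureTheory

noncomputable section

/-- The companion matrix `𝔸(x)` of the order-`r` operator `D = Σ_{k≤r} B_k d^k/dx^k`
(blocks of `Fin (r*n)` via `finProdFinEquiv : Fin r × Fin n ≃ Fin (r*n)`). -/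
def companion (n r : ℕ) (Bm : ℕ → ℝ → Matrix (Fin n) (Fin n) ℂ) (x : ℝ) :
    Matrix (Fin (r * n)) (Fin (r * n)) ℂ :=
  Matrix.reindex finProdFinEquiv finProdFinEquiv
    (Matrix.of fun p q : Fin r × Fin n =>
      if (p.1 : ℕ) + 1 = (q.1 : ℕ) then (if p.2 = q.2 then 1 else 0)
      else if (p.1 : ℕ) = r - 1 then (-((Bm r x)⁻¹ * Bm (q.1 : ℕ) x)) p.2 q.2
      else 0)

/-- `ψ̂(x) = (ψ(x), ψ′(x), …, ψ^{(r−1)}(x)) ∈ ℂ^{rn}` built from the iterated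
derivatives `ψder` of `ψ = ψder 0`. -/
def hatFun (n r : ℕ) (ψder : ℕ → ℝ → Fin n → ℂ) (x : ℝ) (v : Fin (r * n)) : ℂ :=
  let p : Fin r × Fin n := finProdFinEquiv.symm v
  ψder (p.1 : ℕ) x p.2

/-- `[T]_{(1,r)}`: the `n×n` block of `T ∈ Matrix (Fin (r·n)) (Fin (r·n)) ℂ` whose
rows are the first `n` indices and whose columns are the last `n` indices. -/
def blk1r (n r : ℕ) (hr : 0 < r) (T : Matrix (Fin (r * n)) (Fin (r * n)) ℂ) :
    Matrix (Fin n) (Fin n) ℂ :=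
  Matrix.of fun i j =>
    T (finProdFinEquiv ((⟨0, hr⟩ : Fin r), i))
      (finProdFinEquiv ((⟨r - 1, Nat.sub_lt hr Nat.one_pos⟩ : Fin r), j))

/-- The inhomogeneity `(0, …, 0, w)` of the first-order system: `w` placed in the last block. -/
def lastBlk (n r : ℕ) (w : Fin n → ℂ) (v : Fin (r * n)) : ℂ :=
  let p : Fin r × Fin n := finProdFinEquiv.symm v
  if (p.1 : ℕ) = r - 1 then w p.2 else 0

lemma companion_mulVec_of_lt (n r : ℕ) (Bm : ℕ → ℝ → Matrix (Fin n) (Fin n) ℂ) (x : ℝ)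
    (v : Fin (r * n) → ℂ) (k : ℕ) (hk : k + 1 < r) (i : Fin n) :
    (companion n r Bm x).mulVec v (finProdFinEquiv ((⟨k, by omega⟩ : Fin r), i))
      = v (finProdFinEquiv ((⟨k + 1, hk⟩ : Fin r), i)) := by
  rw [Matrix.mulVec, dotProduct, ← finProdFinEquiv.sum_comp,
    Finset.sum_eq_single ((⟨k + 1, hk⟩ : Fin r), i)]
  · simp [companion]
  · rintro ⟨q, j⟩ - hne
    have h1 : k ≠ r - 1 := by omega
    simp only [companion, Matrix.reindex_apply, Matrix.submatrix_apply, Equiv.symm_apply_apply,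
      Matrix.of_apply, if_neg h1]
    split_ifs with h2 h3
    · exact absurd (by ext <;> simp [← h2, ← h3]) hne
    · simp
    · simp
  · simp

lemma companion_mulVec_last (n r : ℕ) (hr : 0 < r) (Bm : ℕ → ℝ → Matrix (Fin n) (Fin n) ℂ) (x : ℝ)
    (v : Fin (r * n) → ℂ) (i : Fin n) :
    (companion n r Bm x).mulVec v
        (finProdFinEquiv ((⟨r - 1, Nat.sub_lt hr Nat.one_pos⟩ : Fin r), i))
      = -(∑ q : Fin r, ((Bm r x)⁻¹ * Bm q x).mulVec (fun j => v (finProdFinEquiv (q, j)))) i := by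
  rw [Matrix.mulVec, dotProduct, ← finProdFinEquiv.sum_comp, Fintype.sum_prod_type,
    Finset.sum_apply, ← Finset.sum_neg_distrib]
  refine Finset.sum_congr rfl fun q _ => ?_
  rw [Matrix.mulVec, dotProduct, ← Finset.sum_neg_distrib]
  refine Finset.sum_congr rfl fun j _ => ?_
  have h1 : ¬ (r - 1 + 1 = (q : ℕ)) := by omega
  simp [companion, h1]

lemma blk1r_mulVec (n r : ℕ) (hr : 0 < r) (T : Matrix (Fin (r * n)) (Fin (r * n)) ℂ)
    (w : Fin n → ℂ) :
    (blk1r n r hr T).mulVec w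
      = fun i => T.mulVec (lastBlk n r w) (finProdFinEquiv ((⟨0, hr⟩ : Fin r), i)) := by
  funext i
  rw [Matrix.mulVec, dotProduct, Matrix.mulVec, dotProduct, ← finProdFinEquiv.sum_comp,
    Fintype.sum_prod_type, Finset.sum_eq_single (⟨r - 1, Nat.sub_lt hr Nat.one_pos⟩ : Fin r)]
  · simp [blk1r, lastBlk]
  · intro q _ hq
    have : (q : ℕ) ≠ r - 1 := fun h => hq (Fin.ext h)
    simp [lastBlk, this]
  · simp

lemma continuousOn_matrix_inv {m : Type*} [Fintype m] [DecidableEq m] {s : Set ℝ}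
    {T : ℝ → Matrix m m ℂ} (hT : ContinuousOn T s) (hu : ∀ x ∈ s, IsUnit (T x)) :
    ContinuousOn (fun x => (T x)⁻¹) s := by
  rw [continuousOn_iff_continuous_domRestrict] at hT ⊢
  have hd : ∀ x : s, (s.domRestrict T x).det ≠ 0 := fun x =>
    ((Matrix.isUnit_iff_isUnit_det _).1 (hu x x.2)).ne_zero
  have : s.domRestrict (fun x => (T x)⁻¹)
      = fun x => ((s.domRestrict T x).det)⁻¹ • (s.domRestrict T x).adjugate := by
    funext x
    simp [Matrix.inv_def, Ring.inverse_eq_inv, domRestrict]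
  rw [this]
  exact (hT.matrix_det.inv₀ hd).smul hT.matrix_adjugate

/-- Variation of constants: if `K′ = A K` and `H′ = K⁻¹ g`, then `Φ = K (H − c)` satisfies
`Φ′ = A Φ + g`. -/
lemma hasDerivWithinAt_variation {m : Type*} [Fintype m] [DecidableEq m] {s : Set ℝ} {x : ℝ}
    {K : ℝ → Matrix m m ℂ} {A : Matrix m m ℂ} {H : ℝ → m → ℂ} {g : m → ℂ} (c : m → ℂ)
    (hK : ∀ i j, HasDerivWithinAt (fun t => K t i j) ((A * K x) i j) s x)
    (hu : IsUnit (K x)) (hH : HasDerivWithinAt H ((K x)⁻¹.mulVec g) s x) :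
    HasDerivWithinAt (fun t => (K t).mulVec (H t - c))
      (A.mulVec ((K x).mulVec (H x - c)) + g) s x := by
  rw [hasDerivWithinAt_pi] at hH ⊢
  intro i
  have h := HasDerivWithinAt.fun_sum (u := Finset.univ) fun j _ =>
    (hK i j).mul ((hH j).sub_const (c j))
  refine h.congr_deriv ?_
  have hg : (K x).mulVec ((K x)⁻¹.mulVec g) = g := by
    rw [Matrix.mulVec_mulVec, Matrix.mul_nonsing_inv _ ((Matrix.isUnit_iff_isUnit_det _).1 hu),
      Matrix.one_mulVec]
  rw [Finset.sum_add_distrib, Matrix.mulVec_mulVec]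
  conv_rhs => rw [← hg]
  rfl

/-- The jump of the kernel at `y = x` splits the integral over `[0,β]` into a Volterra part over
`[0,x]` and a part with the constant matrix `C`. -/
lemma integral_kernel_split {m : Type*} [Fintype m] [DecidableEq m] {E : Type*}
    [NormedAddCommGroup E] [NormedSpace ℂ E] [CompleteSpace E] {β x : ℝ} (hx : x ∈ Icc (0:ℝ) β)
    {h : ℝ → m → ℂ} (hh : Continuous h) (L : (m → ℂ) →L[ℂ] E) (C : Matrix m m ℂ) :
    ∫ y in Icc (0:ℝ) β, L (if x < y then -(C.mulVec (h y)) else (1 - C).mulVec (h y))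
      = L ((∫ y in (0:ℝ)..x, h y) - C.mulVec (∫ y in (0:ℝ)..β, h y)) := by
  have hint : Integrable h (volume.restrict (Icc (0:ℝ) β)) :=
    hh.continuousOn.integrableOn_Icc
  let Cl : (m → ℂ) →L[ℂ] (m → ℂ) := LinearMap.toContinuousLinearMap C.mulVecLin
  have hCl : ∀ v, Cl v = C.mulVec v := fun v => rfl
  have hfun : ∀ y, (if x < y then -(C.mulVec (h y)) else (1 - C).mulVec (h y))
      = (Iic x).indicator h y - Cl (h y) := by
    intro y
    by_cases hxy : x < y
    · simp [hxy, hCl]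
    · simp [hxy, hCl, not_lt.1 hxy, Matrix.sub_mulVec]
  have hi1 : Integrable ((Iic x).indicator h) (volume.restrict (Icc (0:ℝ) β)) :=
    hint.indicator measurableSet_Iic
  have hi2 : Integrable (fun y => Cl (h y)) (volume.restrict (Icc (0:ℝ) β)) :=
    Cl.integrable_comp hint
  have hset : Icc (0:ℝ) β ∩ Iic x = Icc 0 x := by
    ext y
    simp only [mem_inter_iff, mem_Icc, mem_Iic]
    exact ⟨fun h => ⟨h.1.1, h.2⟩, fun h => ⟨⟨h.1, h.2.trans hx.2⟩, h.2⟩⟩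
  simp_rw [hfun]
  rw [L.integral_comp_comm (φ := fun y => (Iic x).indicator h y - Cl (h y)) (hi1.sub hi2),
    integral_sub hi1 hi2, Cl.integral_comp_comm hint,
    setIntegral_indicator measurableSet_Iic, hset, integral_Icc_eq_integral_Ioc,
    integral_Icc_eq_integral_Ioc, intervalIntegral.integral_of_le hx.1,
    intervalIntegral.integral_of_le (hx.1.trans hx.2), hCl]

/-- Let `K̂` be the parallel transport of the companion first-order
system (`K̂(0) = I`, `K̂′ = 𝔸K̂`, `K̂(x)` invertible), let `M̂ + N̂K̂(β)` be
invertible, and define the Green's kernel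
`k_P(x,y) = −[K̂(x)M̂_β⁻¹N̂K̂(β)K̂(y)⁻¹]_{(1,r)}·B_r(y)⁻¹` for `x < y`,
`k_P(x,y) = [K̂(x)(I − M̂_β⁻¹N̂K̂(β))K̂(y)⁻¹]_{(1,r)}·B_r(y)⁻¹` for `y < x`.
Then for every continuous `f`, the function `ψ(x) = ∫₀^β k_P(x,y) f(y) dy` is
`r`-times continuously differentiable on `[0,β]`, solves `Σ_{k≤r} B_k ψ^{(k)} = f`,
and satisfies `M̂ ψ̂(0) + N̂ ψ̂(β) = 0`. -/
theorem statement14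
    (β : ℝ) (hβ : 0 < β) (n r : ℕ) (hn : 1 ≤ n) (hr : 2 ≤ r)
    (Bm : ℕ → ℝ → Matrix (Fin n) (Fin n) ℂ)
    (hBcont : ∀ k ≤ r, ∀ i j, ContinuousOn (fun x => Bm k x i j) (Icc (0:ℝ) β))
    (hBr : ∀ x ∈ Icc (0:ℝ) β, IsUnit (Bm r x))
    (Khat : ℝ → Matrix (Fin (r * n)) (Fin (r * n)) ℂ)
    (hK0 : Khat 0 = 1)
    (hKd : ∀ x ∈ Icc (0:ℝ) β, ∀ i j,
      HasDerivWithinAt (fun t => Khat t i j) ((companion n r Bm x * Khat x) i j)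
        (Icc (0:ℝ) β) x)
    (hKinv : ∀ x ∈ Icc (0:ℝ) β, IsUnit (Khat x))
    (Mh Nh : Matrix (Fin (r * n)) (Fin (r * n)) ℂ)
    (hMβ : IsUnit (Mh + Nh * Khat β))
    (f : ℝ → Fin n → ℂ) (hf : ContinuousOn f (Icc (0:ℝ) β)) :
    ∃ ψder : ℕ → ℝ → Fin n → ℂ,
      ψder 0 = (fun x => ∫ y in Icc (0:ℝ) β,
        Matrix.mulVec
          (if x < y then
            -(blk1r n r (by omega)
                (Khat x * (Mh + Nh * Khat β)⁻¹ * Nh * Khat β * (Khat y)⁻¹))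
              * (Bm r y)⁻¹
          else
            blk1r n r (by omega)
                (Khat x * (1 - (Mh + Nh * Khat β)⁻¹ * Nh * Khat β) * (Khat y)⁻¹)
              * (Bm r y)⁻¹)
          (f y)) ∧
      (∀ k < r, ∀ x ∈ Icc (0:ℝ) β,
        HasDerivWithinAt (ψder k) (ψder (k + 1) x) (Icc (0:ℝ) β) x) ∧
      (∀ k ≤ r, ContinuousOn (ψder k) (Icc (0:ℝ) β)) ∧
      (∀ x ∈ Icc (0:ℝ) β,
        ∑ k ∈ Finset.range (r + 1), Matrix.mulVec (Bm k x) (ψder k x) = f x) ∧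
      Matrix.mulVec Mh (hatFun n r ψder 0) + Matrix.mulVec Nh (hatFun n r ψder β)
        = 0 := by
  have hr0 : 0 < r := by omega
  have h0 : (0:ℝ) ∈ Icc (0:ℝ) β := ⟨le_rfl, hβ.le⟩
  have hβm : β ∈ Icc (0:ℝ) β := ⟨hβ.le, le_rfl⟩
  set C := (Mh + Nh * Khat β)⁻¹ * Nh * Khat β with hC
  let g : ℝ → Fin (r * n) → ℂ := fun y => lastBlk n r ((Bm r y)⁻¹.mulVec (f y))
  have hKc : ContinuousOn Khat (Icc (0:ℝ) β) :=
    continuousOn_pi.2 fun i => continuousOn_pi.2 fun j x hx =>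
      (hKd x hx i j).continuousWithinAt
  have hBc : ∀ k ≤ r, ContinuousOn (Bm k) (Icc (0:ℝ) β) := fun k hk =>
    continuousOn_pi.2 fun i => continuousOn_pi.2 fun j => hBcont k hk i j
  have hmv : ∀ {a b : ℕ} {T : ℝ → Matrix (Fin a) (Fin b) ℂ} {v : ℝ → Fin b → ℂ},
      ContinuousOn T (Icc (0:ℝ) β) → ContinuousOn v (Icc (0:ℝ) β) →
      ContinuousOn (fun y => (T y).mulVec (v y)) (Icc (0:ℝ) β) := by
    intro a b T v hT hv
    rw [continuousOn_iff_continuous_domRestrict] at hT hv ⊢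
    exact hT.matrix_mulVec hv
  have hwc := hmv (continuousOn_matrix_inv (hBc r le_rfl) hBr) hf
  have hgc : ContinuousOn g (Icc (0:ℝ) β) := by
    refine continuousOn_pi.2 fun v => ?_
    simp only [g, lastBlk]
    split_ifs
    · exact continuousOn_pi.1 hwc _
    · exact continuousOn_const
  have hhc := hmv (continuousOn_matrix_inv hKc hKinv) hgc
  -- A globally continuous extension of `K̂⁻¹ g`, so that its primitive is differentiable everywhere.
  let h : ℝ → Fin (r * n) → ℂ := IccExtend hβ.le
    ((Icc (0:ℝ) β).domRestrict fun y => (Khat y)⁻¹.mulVec (g y))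
  have hh : Continuous h := (continuousOn_iff_continuous_domRestrict.1 hhc).Icc_extend'
  have hheq : ∀ y ∈ Icc (0:ℝ) β, h y = (Khat y)⁻¹.mulVec (g y) := fun y hy => by
    simp only [h]
    rw [IccExtend_of_mem _ _ hy]
    rfl
  let H : ℝ → Fin (r * n) → ℂ := fun x => ∫ y in (0:ℝ)..x, h y
  let Φ : ℝ → Fin (r * n) → ℂ := fun x => (Khat x).mulVec (H x - C.mulVec (H β))
  have hΦ : ∀ x ∈ Icc (0:ℝ) β, HasDerivWithinAt Φ ((companion n r Bm x).mulVec (Φ x) + g x)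
      (Icc (0:ℝ) β) x := by
    intro x hx
    refine hasDerivWithinAt_variation _ (hKd x hx) (hKinv x hx) ?_
    rw [← hheq x hx]
    exact (hh.integral_hasStrictDerivAt 0 x).hasDerivAt.hasDerivWithinAt
  have hΦc : ContinuousOn Φ (Icc (0:ℝ) β) := fun x hx => (hΦ x hx).continuousWithinAt
  let ψ : ℝ → Fin n → ℂ := fun x => ∫ y in Icc (0:ℝ) β,
    Matrix.mulVec
      (if x < y then
        -(blk1r n r hr0 (Khat x * (Mh + Nh * Khat β)⁻¹ * Nh * Khat β * (Khat y)⁻¹))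
          * (Bm r y)⁻¹
      else blk1r n r hr0 (Khat x * (1 - C) * (Khat y)⁻¹) * (Bm r y)⁻¹)
      (f y)
  have hψΦ : ∀ x ∈ Icc (0:ℝ) β,
      ψ x = fun i => Φ x (finProdFinEquiv ((⟨0, hr0⟩ : Fin r), i)) := by
    intro x hx
    let L : (Fin (r * n) → ℂ) →L[ℂ] (Fin n → ℂ) := LinearMap.toContinuousLinearMap
      ((LinearMap.funLeft ℂ ℂ fun i : Fin n => finProdFinEquiv ((⟨0, hr0⟩ : Fin r), i)) ∘ₗ
        (Khat x).mulVecLin)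
    have hL : ∀ v, L v =
        fun i => (Khat x).mulVec v (finProdFinEquiv ((⟨0, hr0⟩ : Fin r), i)) := fun v => rfl
    have key := integral_kernel_split hx hh L C
    rw [hL] at key
    refine Eq.trans ?_ key
    refine setIntegral_congr_fun measurableSet_Icc fun y hy => ?_
    simp only [hL, hheq y hy]
    have hblk : ∀ T, (blk1r n r hr0 T * (Bm r y)⁻¹).mulVec (f y)
        = fun i => T.mulVec (g y) (finProdFinEquiv ((⟨0, hr0⟩ : Fin r), i)) := fun T => by
      rw [← Matrix.mulVec_mulVec, blk1r_mulVec]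
    split_ifs with hxy
    · rw [neg_mul, Matrix.neg_mulVec, hblk]
      funext i
      simp only [hC, Matrix.mulVec_neg, Pi.neg_apply, Matrix.mulVec_mulVec, Matrix.mul_assoc]
    · rw [hblk]
      simp only [Matrix.mulVec_mulVec, Matrix.mul_assoc]
  let D : ℝ → Fin n → ℂ := fun x i =>
    ((companion n r Bm x).mulVec (Φ x) + g x)
      (finProdFinEquiv ((⟨r - 1, Nat.sub_lt hr0 Nat.one_pos⟩ : Fin r), i))
  let ψder : ℕ → ℝ → Fin n → ℂ := fun k x =>
    if k = 0 then ψ x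
    else if hk : k < r then fun i => Φ x (finProdFinEquiv ((⟨k, hk⟩ : Fin r), i))
    else D x
  have hlt : ∀ k (hk : k < r), ∀ x ∈ Icc (0:ℝ) β,
      ψder k x = fun i => Φ x (finProdFinEquiv ((⟨k, hk⟩ : Fin r), i)) := by
    intro k hk x hx
    by_cases hk0 : k = 0
    · subst hk0
      simpa [ψder] using hψΦ x hx
    · simp [ψder, hk0, hk]
  have hrD : ∀ x, ψder r x = D x := fun x => by simp [ψder, hr0.ne']
  have hDval : ∀ x, D x = -(∑ q : Fin r, ((Bm r x)⁻¹ * Bm q x).mulVec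
      (fun j => Φ x (finProdFinEquiv (q, j)))) + (Bm r x)⁻¹.mulVec (f x) := by
    intro x
    funext i
    simp only [D, Pi.add_apply, companion_mulVec_last n r hr0, Pi.neg_apply]
    simp [g, lastBlk]
  have hDc : ContinuousOn D (Icc (0:ℝ) β) := by
    have : D = fun x => -(∑ q : Fin r, ((Bm r x)⁻¹).mulVec ((Bm q x).mulVec
      (fun j => Φ x (finProdFinEquiv (q, j))))) + (Bm r x)⁻¹.mulVec (f x) := by
      funext x
      rw [hDval x]
      simp only [Matrix.mulVec_mulVec]
    rw [this]
    refine (continuousOn_finsetSum _ fun q _ => ?_).neg.add hwc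
    exact hmv (continuousOn_matrix_inv (hBc r le_rfl) hBr) (hmv (hBc q q.2.le)
      (continuousOn_pi.2 fun j => continuousOn_pi.1 hΦc _))
  refine ⟨ψder, ?_, ?_, ?_, ?_, ?_⟩
  · funext x
    simp [ψder, ψ]
  · intro k hk x hx
    refine HasDerivWithinAt.congr (f := fun x i => Φ x (finProdFinEquiv ((⟨k, hk⟩ : Fin r), i)))
      ?_ (fun y hy => hlt k hk y hy) (hlt k hk x hx)
    rw [hasDerivWithinAt_pi]
    intro i
    refine (hasDerivWithinAt_pi.1 (hΦ x hx) _).congr_deriv ?_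
    rcases Nat.lt_or_ge (k + 1) r with hk1 | hk1
    · rw [hlt (k + 1) hk1 x hx, Pi.add_apply, companion_mulVec_of_lt n r Bm x _ k hk1]
      have : k ≠ r - 1 := by omega
      simp [g, lastBlk, this]
    · obtain rfl : r = k + 1 := by omega
      rw [hrD]
      rfl
  · intro k hk
    rcases hk.lt_or_eq with hk | rfl
    · exact (continuousOn_pi.2 fun i => continuousOn_pi.1 hΦc _).congr (hlt k hk)
    · exact hDc.congr fun x _ => hrD x
  · intro x hx
    have hB : Bm r x * (Bm r x)⁻¹ = 1 :=
      Matrix.mul_nonsing_inv _ ((Matrix.isUnit_iff_isUnit_det _).1 (hBr x hx))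
    rw [Finset.sum_range_succ, Finset.sum_range, hrD, hDval, Matrix.mulVec_add, Matrix.mulVec_neg,
      Matrix.mulVec_sum]
    simp only [Matrix.mulVec_mulVec, ← Matrix.mul_assoc, hB, Matrix.one_mul, Matrix.one_mulVec]
    rw [← add_assoc, Finset.sum_congr rfl fun (q : Fin r) _ => by rw [hlt q q.2 x hx],
      add_neg_cancel, zero_add]
  · have hhat : ∀ x ∈ Icc (0:ℝ) β, hatFun n r ψder x = Φ x := by
      intro x hx
      funext v
      obtain ⟨⟨p, i⟩, rfl⟩ := finProdFinEquiv.surjective v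
      simp only [hatFun, Equiv.symm_apply_apply]
      rw [hlt p p.2 x hx]
    have hH0 : H 0 = 0 := intervalIntegral.integral_same
    have hMC : (Mh + Nh * Khat β) * C = Nh * Khat β := by
      rw [hC, Matrix.mul_assoc, ← Matrix.mul_assoc,
        Matrix.mul_nonsing_inv _ ((Matrix.isUnit_iff_isUnit_det _).1 hMβ), Matrix.one_mul]
    rw [hhat 0 h0, hhat β hβm]
    simp only [Φ, hK0, hH0, Matrix.one_mulVec, zero_sub, Matrix.mulVec_neg, Matrix.mulVec_sub,
      Matrix.mulVec_mulVec]
    rw [← hMC, Matrix.add_mul, Matrix.add_mulVec]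
    simp only [Matrix.mul_assoc, Matrix.one_mul]
    abel
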